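/- arXiv:2211.10781 — 5 statements merged into one kernel-verified Lean document; each statement's English description precedes it below -/
import Mathlib

section
/- Let A be a finitely generated commutative ring (finitely generated as a ℤ-algebra) that is reduced (has no nonzero nilpotent elements). Then A is approximated by finite fields: for every nonzero a ∈ A there exist a finite field F and a ring homomorphism φ : A → F with φ(a) ≠ 0. Equivalently, the intersection of the kernels of all ring homomorphisms from A to finite fields is zero. -/
/-!
Being Jacobson passes from `ℤ` to every finitely generated commutative ring `A`
(`isJacobsonRing_of_finiteType`), so when `A` is reduced its maximal ideals intersect in
`nilradical A = 0`. A nonzero `a` therefore lies outside some maximal ideal `m`, and survives in the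
field `A ⧸ m`. That field is finite: by Zariski's lemma over the Jacobson ring `ℤ` it is a finitely
generated abelian group, and it has positive characteristic because otherwise the field would be an integral
extension of `ℤ`, making `ℤ` a field. Hence the group is also torsion, so finite.
-/

/-- A nonzero prime of `ℤ` is maximal, and `0` is the Jacobson radical of `ℤ` because
`x * x + 1` is a unit only for `x = 0`. -/
theorem isJacobsonRing_int : IsJacobsonRing ℤ := by
  rw [isJacobsonRing_iff_prime_eq]
  intro P hP
  by_cases h : P = ⊥
  · subst h
    refine le_antisymm (fun x hx => ?_) Ideal.le_jacobson
    have hu := Ideal.mem_jacobson_bot.1 hx x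
    rw [Int.isUnit_iff] at hu
    rw [Ideal.mem_bot]
    rcases hu with hu | hu <;> nlinarith
  · have := hP.isMaximal h
    exact Ideal.jacobson_eq_self_of_isMaximal

/-- A field that is finitely generated as a ring is finite. -/
theorem finite_of_field_of_finiteType_int (K : Type*) [Field K] [Algebra.FiniteType ℤ K] :
    Finite K := by
  have := isJacobsonRing_int
  have : Module.Finite ℤ K := finite_of_finite_type_of_isJacobsonRing ℤ K
  obtain ⟨n, hn, hn0⟩ : ∃ n : ℤ, (n : K) = 0 ∧ n ≠ 0 := by
    by_contra! h
    exact Int.not_isField (isField_of_isIntegral_of_isField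
      ((injective_iff_map_eq_zero (algebraMap ℤ K)).2 fun n hn => h n (by simpa using hn))
      (Field.toIsField K))
  refine Module.finite_of_fg_torsion K fun x =>
    ⟨⟨n, mem_nonZeroDivisors_of_ne_zero hn0⟩, ?_⟩
  change n • x = 0
  rw [zsmul_eq_mul, hn, zero_mul]

/-- Lemma 6: A finitely generated reduced commutative ring is approximated by finite
fields: every nonzero element survives in some ring homomorphism to a finite field. -/
theorem stmt_12 (A : Type*) [CommRing A] [IsReduced A] (hfg : Algebra.FiniteType ℤ A)
    (a : A) (ha : a ≠ 0) :
    ∃ (F : Type) (_ : Field F) (_ : Finite F) (φ : A →+* F), φ a ≠ 0 := by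
  have := isJacobsonRing_int
  have : IsJacobsonRing A := isJacobsonRing_of_finiteType (A := ℤ)
  have hJ : a ∉ (⊥ : Ideal A).jacobson := by
    rw [← Ideal.radical_eq_jacobson]
    rintro ⟨n, hn⟩
    exact ha (IsReduced.eq_zero a ⟨n, hn⟩)
  obtain ⟨m, hm, ham⟩ : ∃ m : Ideal A, m.IsMaximal ∧ a ∉ m := by
    by_contra! h
    exact hJ (Ideal.mem_sInf.2 fun {I} hI => h I hI.2)
  let := Ideal.Quotient.field m
  have : Finite (A ⧸ m) :=
    -- `toIntAlgHom` gives `A ⧸ m` the `ℤ`-algebra structure coming from its ring structure, which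
    -- is not syntactically the one inherited from `A`.
    have := hfg.of_surjective (Ideal.Quotient.mk m).toIntAlgHom Ideal.Quotient.mk_surjective
    finite_of_field_of_finiteType_int (A ⧸ m)
  -- A finite type is small in every universe, so the residue field has a copy in `Type`.
  refine ⟨Shrink.{0} (A ⧸ m), inferInstance, inferInstance,
    (Shrink.ringEquiv.{0} (A ⧸ m)).symm.toRingHom.comp (Ideal.Quotient.mk m), ?_⟩
  simpa [Ideal.Quotient.eq_zero_iff_mem] using ham
end

section
/- Let A be a finitely generated commutative ring (finitely generated as a ℤ-algebra) that is reduced (has no nonzero nilpotent elements). Then there exist finitely many prime ideals P₁,…,Pₙ of A such that each Pᵢ is invariant under every derivation of A (i.e. d(Pᵢ) ⊆ Pᵢ for every derivation d of A), each quotient A/Pᵢ is a domain, and P₁ ∩ ⋯ ∩ Pₙ = (0). -/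
/-!
The required primes are the minimal primes of `A`: there are finitely many because `A` is
Noetherian, and they intersect in the nilradical, which is zero. In a reduced Noetherian ring each
minimal prime is the annihilator of a single element `y`
(`Submodule.exists_eq_colon_of_mem_minimalPrimes`). The annihilator of `y` is invariant under every
derivation `d`: if `x * y = 0`, then `d x * y = -(x * d y)`, and multiplying by `y` gives
`d x * y ^ 2 = 0`, so `d x * y` is nilpotent, hence zero.
-/

theorem derivation_mul_eq_zero {A : Type*} [CommRing A] [IsReduced A] (d : Derivation ℤ A A)
    {x y : A} (hxy : x * y = 0) : d x * y = 0 := by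
  have h : x * d y + y * d x = 0 := by
    simpa only [Derivation.leibniz, smul_eq_mul, map_zero] using congrArg d hxy
  refine pow_eq_zero_iff two_ne_zero |>.mp ?_
  linear_combination y * d x * h - d x * d y * hxy

theorem derivation_mem_of_mem_minimalPrimes {A : Type*} [CommRing A] [IsReduced A]
    [IsNoetherianRing A] {P : Ideal A} (hP : P ∈ minimalPrimes A) (d : Derivation ℤ A A)
    {x : A} (hx : x ∈ P) : d x ∈ P := by
  -- The zero ideal is the annihilator of `1`.
  have hbot : (⊥ : Ideal A).colon {(1 : A)} = ⊥ := by
    ext a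
    simp [Submodule.mem_colon_singleton]
  obtain ⟨y, rfl⟩ := Submodule.exists_eq_colon_of_mem_minimalPrimes (N := (⊥ : Ideal A))
    (x := (1 : A)) (I := P) (by rwa [hbot])
  rw [Submodule.mem_colon_singleton, Submodule.mem_bot, smul_eq_mul] at hx ⊢
  exact derivation_mul_eq_zero d hx

/-- Lemma 8: A finitely generated reduced commutative ring has finitely many prime
ideals `P₁, …, Pₙ`, each invariant under all derivations, with zero intersection. -/
theorem stmt_14 (A : Type*) [CommRing A] [IsReduced A] (hfg : Algebra.FiniteType ℤ A) :
    ∃ (n : ℕ) (P : Fin n → Ideal A),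
      (∀ i, (P i).IsPrime) ∧
      (∀ i, ∀ d : Derivation ℤ A A, ∀ x ∈ P i, d x ∈ P i) ∧
      (⨅ i, P i) = ⊥ := by
  have : IsNoetherianRing A := Algebra.FiniteType.isNoetherianRing ℤ A
  have hfin : (minimalPrimes A).Finite := minimalPrimes.finite_of_isNoetherianRing A
  obtain ⟨n, P, -, hP⟩ := hfin.fin_param
  have hmem (i : Fin n) : P i ∈ minimalPrimes A := hP ▸ Set.mem_range_self i
  refine ⟨n, P, fun i => (hmem i).1.1,
    fun i d x hx => derivation_mem_of_mem_minimalPrimes (hmem i) d hx, ?_⟩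
  rw [← sInf_range, hP, minimalPrimes, Ideal.sInf_minimalPrimes]
  exact nilradical_eq_zero A
end

section
/- Let A be a commutative algebra over the field ℚ of rational numbers, and let J be an ideal of A such that the intersection ⋂_{k ≥ 1} Jᵏ of all powers of J is zero. Let φ be a ℚ-algebra automorphism of A of finite order (φⁿ = id for some n ≥ 1) such that (φ − id)(Jᵏ) ⊆ J^{k+1} for every k ≥ 0 (where J⁰ = A). Then φ = id. In particular, the stabilizer in Aut(A) of the descending chain A ⊇ J ⊇ J² ⊇ ⋯ is torsion free. -/
/-!
Fix `x` and put `d = φ x - x`. If `d ∈ Jᵏ`, then `φ d ≡ d` modulo `J^{k+1}`, so iterating gives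
`φᵐ x ≡ x + m d` modulo `J^{k+1}` (`pow_apply_sub_mem`). For `m = n` this says `n d ∈ J^{k+1}`, and
`n` is invertible in `A`, so `d ∈ J^{k+1}`. Hence `d` lies in every power of `J`, and `d = 0`.
-/

/-- If `φ x - x` lies in `Jᵏ`, then `φᵐ x ≡ x + m (φ x - x)` modulo `J^{k+1}`. -/
theorem pow_apply_sub_mem {A : Type*} [CommRing A] [Algebra ℚ A] (J : Ideal A) (φ : A ≃ₐ[ℚ] A)
    (hφ : ∀ k : ℕ, ∀ x ∈ J ^ k, φ x - x ∈ J ^ (k + 1)) {k : ℕ} {x : A}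
    (hx : φ x - x ∈ J ^ k) (m : ℕ) :
    (φ ^ m) x - x - (m : A) * (φ x - x) ∈ J ^ (k + 1) := by
  induction m with
  | zero => simp
  | succ m ih =>
    set e := (φ ^ m) x - x - (m : A) * (φ x - x) with he
    have h1 : φ e - e ∈ J ^ (k + 1) := Ideal.pow_le_pow_right (Nat.le_succ _) (hφ _ _ ih)
    have h2 := Ideal.mul_mem_left _ (m : A) (hφ _ _ hx)
    convert add_mem (add_mem h1 ih) h2 using 1
    rw [he, pow_succ', AlgEquiv.mul_apply]
    simp only [map_sub, map_mul, map_natCast]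
    push_cast
    ring

/-- An automorphism of finite order of a commutative `ℚ`-algebra stabilizing the chain
`A ⊇ J ⊇ J² ⊇ ⋯` (i.e. `(φ - 1)(Jᵏ) ⊆ J^{k+1}`), where `⋂_{k ≥ 1} Jᵏ = 0`, is the
identity.  In particular the stabilizer of the chain is torsion free. -/
theorem stmt_16 (A : Type*) [CommRing A] [Algebra ℚ A] (J : Ideal A)
    (hJ : (⨅ k : ℕ, J ^ (k + 1)) = ⊥)
    (φ : A ≃ₐ[ℚ] A) (n : ℕ) (hn : 1 ≤ n) (hφn : φ ^ n = 1)
    (hφ : ∀ k : ℕ, ∀ x ∈ J ^ k, φ x - x ∈ J ^ (k + 1)) :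
    φ = 1 := by
  have key : ∀ (x : A) (k : ℕ), φ x - x ∈ J ^ k := by
    intro x k
    induction k with
    | zero => simp
    | succ k ih =>
      have h := pow_apply_sub_mem J φ hφ ih n
      rw [hφn, AlgEquiv.one_apply, sub_self, zero_sub, neg_mem_iff] at h
      have hu : IsUnit (n : A) := by
        have h0 : IsUnit (n : ℚ) := IsUnit.mk0 _ (Nat.cast_ne_zero.mpr (by omega))
        simpa using h0.map (algebraMap ℚ A)
      exact (Ideal.unit_mul_mem_iff_mem _ hu).mp h
  ext x
  have h : φ x - x ∈ ⨅ k : ℕ, J ^ (k + 1) := by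
    rw [Ideal.mem_iInf]
    exact fun k => key x (k + 1)
  rw [hJ, Ideal.mem_bot] at h
  exact sub_eq_zero.mp h
end

section
/- Let A be a finitely generated commutative ring (finitely generated as a ℤ-algebra) and let F be a finite field. Then the set of ideals P of A such that the quotient ring A/P is isomorphic to F (as a ring) is finite. -/
/-- In a finitely generated commutative ring `A`, for a fixed finite field `F` there
are only finitely many ideals `P` with `A/P ≅ F`. -/
theorem stmt_17 (A : Type*) [CommRing A] (hfg : Algebra.FiniteType ℤ A)
    (F : Type*) [Field F] [Finite F] :
    {P : Ideal A | Nonempty ((A ⧸ P) ≃+* F)}.Finite := by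
  obtain ⟨s, hs⟩ := hfg.out
  -- A ring homomorphism `A → F` is determined by its values on the generators `s`.
  have hinj : Function.Injective (fun (f : A →ₐ[ℤ] F) (x : s) => f x) := fun f g h =>
    AlgHom.ext_of_adjoin_eq_top hs fun x hx => congrFun h ⟨x, hx⟩
  have : Finite (A →ₐ[ℤ] F) := Finite.of_injective _ hinj
  -- Every `P` in the set is the kernel of the composite `A → A ⧸ P ≃ F`.
  refine (Set.finite_range fun f : A →ₐ[ℤ] F => RingHom.ker f).subset ?_
  rintro P ⟨e⟩
  refine ⟨(e.toRingHom.comp (Ideal.Quotient.mk P)).toIntAlgHom, ?_⟩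
  ext x
  simp [RingHom.mem_ker, Ideal.Quotient.eq_zero_iff_mem]
end

section
/- Let p be a prime number and let A be a finitely generated commutative ring with pA = 0 (i.e. A has characteristic p). Then every locally nilpotent derivation d of A is nilpotent: there exists an integer k ≥ 0 such that d^{p^k} = 0 as an additive map on A. -/
/-!
In the general Leibniz rule for `d ^ p` every interior binomial coefficient is divisible by `p`, so
in characteristic `p` the map `d ^ p` is again a derivation (`exists_derivation_eq_pow_prime`);
iterating, so is `d ^ p ^ k` for every `k`. Choose a finite generating set of `A` and `k` so large
that `d ^ p ^ k` kills each generator. Then `d ^ p ^ k` is a derivation vanishing on a generating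
set, hence zero.
-/

open Finset in
/-- The general Leibniz rule for powers of a derivation. -/
lemma derivation_pow_apply_mul {A : Type*} [CommRing A] (d : Derivation ℤ A A) (n : ℕ) (a b : A) :
    (Derivation.toLinearMap d ^ n) (a * b) =
      ∑ ij ∈ antidiagonal n, n.choose ij.1 •
        ((Derivation.toLinearMap d ^ ij.1) a * (Derivation.toLinearMap d ^ ij.2) b) := by
  induction n with
  | zero => simp
  | succ n ih =>
    rw [sum_antidiagonal_choose_succ_nsmul (M := A) (fun i j =>
      (Derivation.toLinearMap d ^ i) a * (Derivation.toLinearMap d ^ j) b) n]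
    simp only [pow_succ', Module.End.mul_apply, ih, map_sum, map_nsmul,
      Derivation.coeFn_coe, Derivation.leibniz, smul_eq_mul,
      smul_add, sum_add_distrib, add_right_inj]
    refine sum_congr rfl fun ⟨i, j⟩ hij ↦ ?_
    rw [n.choose_symm_of_eq_add (mem_antidiagonal.1 hij).symm, mul_comm]

/-- In characteristic `p`, the `p`-th power of a derivation is a derivation. -/
lemma exists_derivation_eq_pow_prime {p : ℕ} (hp : p.Prime) {A : Type*} [CommRing A]
    (hpA : ∀ a : A, p • a = 0) (d : Derivation ℤ A A) :
    ∃ e : Derivation ℤ A A, Derivation.toLinearMap e = Derivation.toLinearMap d ^ p := by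
  refine ⟨Derivation.mk' (Derivation.toLinearMap d ^ p) fun a b => ?_, rfl⟩
  have hne : ((0, p) : ℕ × ℕ) ≠ (p, 0) := fun h => hp.ne_zero (Prod.ext_iff.1 h).2
  rw [derivation_pow_apply_mul, ← Finset.sum_subset (s₁ := {(0, p), (p, 0)}),
    Finset.sum_pair hne]
  · simp [mul_comm]
  · intro x hx
    simp only [Finset.mem_insert, Finset.mem_singleton] at hx
    rcases hx with rfl | rfl <;> simp
  · rintro ⟨i, j⟩ hij hx
    rw [Finset.HasAntidiagonal.mem_antidiagonal] at hij
    simp only [Finset.mem_insert, Finset.mem_singleton, Prod.mk.injEq] at hij hx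
    obtain ⟨c, hc⟩ := hp.dvd_choose_self (k := i) (by omega) (by omega)
    simp only [hc, mul_smul, hpA]

lemma exists_derivation_eq_pow_prime_pow {p : ℕ} (hp : p.Prime) {A : Type*} [CommRing A]
    (hpA : ∀ a : A, p • a = 0) (d : Derivation ℤ A A) (k : ℕ) :
    ∃ e : Derivation ℤ A A, Derivation.toLinearMap e = Derivation.toLinearMap d ^ p ^ k := by
  induction k with
  | zero => exact ⟨d, by simp⟩
  | succ k ih =>
    obtain ⟨e, he⟩ := ih
    obtain ⟨f, hf⟩ := exists_derivation_eq_pow_prime hp hpA e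
    exact ⟨f, by rw [hf, he, ← pow_mul, ← pow_succ]⟩

/-- In characteristic `p`, a locally nilpotent derivation of a finitely generated
commutative ring is nilpotent: some `p`-power of it vanishes. -/
theorem stmt_18 (p : ℕ) (hp : p.Prime) (A : Type*) [CommRing A]
    (hfg : Algebra.FiniteType ℤ A) (hpA : ∀ a : A, p • a = 0)
    (d : Derivation ℤ A A)
    (hln : ∀ a : A, ∃ n : ℕ, 1 ≤ n ∧ (Derivation.toLinearMap d ^ n) a = 0) :
    ∃ k : ℕ, Derivation.toLinearMap d ^ p ^ k = 0 := by
  obtain ⟨s, hs⟩ := hfg.out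
  choose n _ hn using hln
  -- Since `k < p ^ k`, the exponent `k = s.sup n` is large enough for every generator.
  obtain ⟨e, he⟩ := exists_derivation_eq_pow_prime_pow hp hpA d (s.sup n)
  have he0 : e = 0 := by
    refine Derivation.ext_of_adjoin_eq_top (s : Set A) hs fun a ha => ?_
    have hle : n a ≤ p ^ s.sup n := (Finset.le_sup ha).trans (Nat.lt_pow_self hp.one_lt).le
    change Derivation.toLinearMap e a = 0
    rw [he, ← Nat.sub_add_cancel hle, pow_add, Module.End.mul_apply, hn, map_zero]
  exact ⟨s.sup n, by rw [← he, he0]; rfl⟩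
end
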